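/- Let r be a positive integer, m_1, …, m_r positive integers with m := m_1 + ⋯ + m_r, and let a, b, c, d_1, …, d_r be complex numbers with Re(c − a − b) > m, such that c is not a nonpositive integer or zero, c − a, c − b are not nonpositive integers or zero, each d_i is not a nonpositive integer or zero, and 1 + a + b − c is such that (1+a+b−c)_k ≠ 0 for 0 ≤ k ≤ m. Define C_k := ((−1)^k / k!) · Σ_{j=0}^k (−k)_j ∏_{i=1}^r (d_i+m_i)_j / (∏_{i=1}^r (d_i)_j · j!) for 0 ≤ k ≤ m. Then Σ_{k=0}^∞ (a)_k (b)_k ∏_{i=1}^r (d_i+m_i)_k / ((c)_k ∏_{i=1}^r (d_i)_k · k!) = [Γ(c) Γ(c−a−b) / (Γ(c−a) Γ(c−b))] · Σ_{k=0}^m (−1)^k (a)_k (b)_k C_k / (1+a+b−c)_k. -/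

import Mathlib

/-- The Pochhammer symbol `(a)_k = a (a+1) ⋯ (a+k-1)`. -/
noncomputable def poch (a : ℂ) (k : ℕ) : ℂ := Polynomial.eval a (ascPochhammer ℂ k)

open Filter Topology Asymptotics

theorem poch_zero (a : ℂ) : poch a 0 = 1 := by simp [poch]

theorem poch_succ (a : ℂ) (n : ℕ) : poch a (n + 1) = poch a n * (a + n) := by
  simp [poch, ascPochhammer_succ_eval]

theorem poch_add (a : ℂ) (k j : ℕ) : poch a (k + j) = poch a k * poch (a + k) j := by
  simp [poch, ← ascPochhammer_mul ℂ k j]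

theorem poch_prod (a : ℂ) (n : ℕ) : poch a n = ∏ j ∈ Finset.range n, (a + j) := by
  induction n with
  | zero => simp [poch_zero]
  | succ n ih => rw [poch_succ, Finset.prod_range_succ, ih]

theorem poch_one (n : ℕ) : poch 1 n = (n.factorial : ℂ) := by
  simp [poch, ascPochhammer_eval_one]

theorem poch_ne_zero {a : ℂ} (ha : ∀ n : ℕ, a ≠ -(n : ℂ)) (n : ℕ) : poch a n ≠ 0 := by
  rw [poch_prod, Finset.prod_ne_zero_iff]
  intro j _ h
  exact ha j (eq_neg_of_add_eq_zero_left h)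

theorem poch_succ_left (a : ℂ) (n : ℕ) : poch a (n + 1) = a * poch (a + 1) n := by
  rw [add_comm n 1, poch_add, poch_succ, poch_zero]; simp

theorem gammaSeq_ne {a : ℂ} (ha : ∀ n : ℕ, a ≠ -(n : ℂ)) {n : ℕ} (hn : n ≠ 0) :
    Complex.GammaSeq a n ≠ 0 := by
  rw [Complex.GammaSeq, ← poch_prod]
  have h1 := poch_ne_zero ha (n + 1)
  have h2 : (n : ℂ) ^ a ≠ 0 := by
    rw [Complex.cpow_def_of_ne_zero (by exact_mod_cast hn)]; exact Complex.exp_ne_zero _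
  have h3 : (n.factorial : ℂ) ≠ 0 := by exact_mod_cast n.factorial_ne_zero
  positivity

theorem poch_eq_gammaSeq {a : ℂ} (ha : ∀ n : ℕ, a ≠ -(n : ℂ)) {n : ℕ} (hn : n ≠ 0) :
    poch a (n + 1) = (n : ℂ) ^ a * n.factorial / Complex.GammaSeq a n := by
  rw [eq_div_iff (gammaSeq_ne ha hn), Complex.GammaSeq, ← poch_prod]
  field_simp [poch_ne_zero ha (n + 1)]

/-- Terms of the Gauss series. -/
noncomputable def gt (a b c : ℂ) (n : ℕ) : ℂ :=
  poch a n * poch b n / (poch c n * (n.factorial : ℂ))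

theorem one_ne_neg : ∀ n : ℕ, (1 : ℂ) ≠ -(n : ℂ) := by
  intro n h
  have : ((1 + n : ℕ) : ℂ) = 0 := by push_cast; linear_combination h
  have := Nat.cast_eq_zero.mp this
  omega

theorem gt_bigO (a b c : ℂ) (hc : ∀ n : ℕ, c ≠ -(n : ℂ)) :
    (fun n : ℕ => gt a b c (n + 1)) =O[atTop] fun n : ℕ => (n : ℝ) ^ ((a + b - c).re - 1) := by
  by_cases ha : ∃ k : ℕ, a = -(k : ℂ)
  · obtain ⟨k, rfl⟩ := ha
    have : (fun n : ℕ => gt (-(k : ℂ)) b c (n + 1)) =ᶠ[atTop] fun _ => (0 : ℂ) := by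
      filter_upwards [eventually_ge_atTop k] with n hn
      have : poch (-(k : ℂ)) (n + 1) = 0 := ascPochhammer_eval_neg_coe_nat_of_lt (by omega)
      simp [gt, this]
    exact this.trans_isBigO (isBigO_zero _ _)
  by_cases hb : ∃ k : ℕ, b = -(k : ℂ)
  · obtain ⟨k, rfl⟩ := hb
    have : (fun n : ℕ => gt a (-(k : ℂ)) c (n + 1)) =ᶠ[atTop] fun _ => (0 : ℂ) := by
      filter_upwards [eventually_ge_atTop k] with n hn
      have : poch (-(k : ℂ)) (n + 1) = 0 := ascPochhammer_eval_neg_coe_nat_of_lt (by omega)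
      simp [gt, this]
    exact this.trans_isBigO (isBigO_zero _ _)
  push Not at ha hb
  have hlim := ((Complex.GammaSeq_tendsto_Gamma c).mul (Complex.GammaSeq_tendsto_Gamma 1)).div
    ((Complex.GammaSeq_tendsto_Gamma a).mul (Complex.GammaSeq_tendsto_Gamma b))
    (mul_ne_zero (Complex.Gamma_ne_zero ha) (Complex.Gamma_ne_zero hb))
  have hO := hlim.isBigO_one ℝ
  have hP : (fun n : ℕ => (n : ℂ) ^ (a + b - c - 1)) =O[atTop]
      fun n : ℕ => (n : ℝ) ^ ((a + b - c).re - 1) := by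
    apply IsBigO.of_bound 1
    filter_upwards [eventually_gt_atTop 0] with n hn
    rw [Complex.norm_natCast_cpow_of_pos hn, one_mul]
    simp only [Complex.sub_re, Complex.one_re]
    exact le_abs_self _
  have := hO.mul hP
  simp only [one_mul] at this
  refine IsBigO.congr' this ?_ EventuallyEq.rfl
  filter_upwards [eventually_ne_atTop 0] with n hn
  simp only [Pi.mul_apply, Pi.div_apply]
  rw [gt, ← poch_one, poch_eq_gammaSeq ha hn, poch_eq_gammaSeq hb hn, poch_eq_gammaSeq hc hn,
    poch_eq_gammaSeq one_ne_neg hn]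
  have hn' : (n : ℂ) ≠ 0 := by exact_mod_cast hn
  have e : (n : ℂ) ^ (a + b - c - 1) = (n : ℂ) ^ a * (n : ℂ) ^ b / ((n : ℂ) ^ c * (n : ℂ) ^ (1 : ℂ)) := by
    rw [Complex.cpow_sub _ _ hn', Complex.cpow_sub _ _ hn', Complex.cpow_add _ _ hn', div_div]
  rw [e]
  have h1 := gammaSeq_ne ha hn
  have h2 := gammaSeq_ne hb hn
  have h3 := gammaSeq_ne hc hn
  have h4 := gammaSeq_ne one_ne_neg hn
  have h5 : (n : ℂ) ^ c ≠ 0 := by simp [Complex.cpow_eq_zero_iff, hn]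
  have h6 : (n : ℂ) ^ (1 : ℂ) ≠ 0 := by simp [hn]
  have h7 : (n.factorial : ℂ) ≠ 0 := by exact_mod_cast n.factorial_ne_zero
  generalize (n : ℂ) ^ (1 : ℂ) = q at *
  generalize (n : ℂ) ^ c = q1 at *
  generalize (n : ℂ) ^ b = q2 at *
  generalize (n : ℂ) ^ a = q3 at *
  field_simp

theorem gt_summable (a b c : ℂ) (hc : ∀ n : ℕ, c ≠ -(n : ℂ)) (hre : 0 < (c - a - b).re) :
    Summable (gt a b c) := by
  rw [← summable_nat_add_iff 1]
  refine summable_of_isBigO_nat ?_ (gt_bigO a b c hc)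
  rw [Real.summable_nat_rpow]
  simp only [Complex.sub_re, Complex.add_re] at *
  linarith

theorem gt_tendsto (a b c : ℂ) (hc : ∀ n : ℕ, c ≠ -(n : ℂ)) (hre : 0 < (c - a - b).re) :
    Tendsto (fun n : ℕ => (n : ℂ) * gt a b c n) atTop (𝓝 0) := by
  rw [← tendsto_add_atTop_iff_nat 1]
  have h1 : (fun n : ℕ => ((n + 1 : ℕ) : ℂ)) =O[atTop] fun n : ℕ => (n : ℝ) := by
    apply IsBigO.of_bound 2
    filter_upwards [eventually_ge_atTop 1] with n hn
    rw [Complex.norm_natCast]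
    push_cast
    have : (1 : ℝ) ≤ n := by exact_mod_cast hn
    rw [Real.norm_of_nonneg (by linarith)]
    linarith
  have h2 := h1.mul (gt_bigO a b c hc)
  refine h2.trans_tendsto ?_
  have h3 : Tendsto (fun n : ℕ => (n : ℝ) ^ (-(c - a - b).re)) atTop (𝓝 0) :=
    (tendsto_rpow_neg_atTop hre).comp tendsto_natCast_atTop_atTop
  refine h3.congr' ?_
  filter_upwards [eventually_gt_atTop 0] with n hn
  have hn' : (0 : ℝ) < n := by exact_mod_cast hn
  rw [← Real.rpow_one_add' hn'.le]
  · congr 1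
    simp only [Complex.sub_re, Complex.add_re]
    ring
  · simp only [Complex.sub_re, Complex.add_re] at *
    linarith

theorem gauss_step (a b c : ℂ) (hc : ∀ n : ℕ, c ≠ -(n : ℂ)) (hre : 0 < (c - a - b).re) :
    c * (c - a - b) * ∑' n, gt a b c n = (c - a) * (c - b) * ∑' n, gt a b (c + 1) n := by
  have hc1 : ∀ n : ℕ, c + 1 ≠ -(n : ℂ) := by
    intro n h
    exact hc (n + 1) (by push_cast; linear_combination h)
  have hre1 : 0 < (c + 1 - a - b).re := by
    simp only [Complex.sub_re, Complex.add_re, Complex.one_re] at *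
    linarith
  have hs := (gt_summable a b c hc hre).hasSum.mul_left (c * (c - a - b))
  have hs1 := (gt_summable a b (c + 1) hc1 hre1).hasSum.mul_left ((c - a) * (c - b))
  have h := (hs.sub hs1).tendsto_sum_nat
  have key : ∀ N : ℕ, ∑ n ∈ Finset.range N, (c * (c - a - b) * gt a b c n
      - (c - a) * (c - b) * gt a b (c + 1) n) = -c * (N * gt a b c N) := by
    intro N
    induction N with
    | zero => simp
    | succ N ih =>
      rw [Finset.sum_range_succ, ih]
      have e1 : gt a b (c + 1) N = gt a b c N * (c / (c + N)) := by
        have := poch_succ_left c N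
        rw [poch_succ] at this
        have p1 := poch_ne_zero hc N
        have p2 := poch_ne_zero hc1 N
        have p3 : c + N ≠ 0 := fun h => hc N (eq_neg_of_add_eq_zero_left h)
        have p4 : (N.factorial : ℂ) ≠ 0 := by exact_mod_cast N.factorial_ne_zero
        rw [gt, gt]
        field_simp
        linear_combination poch a N * poch b N * this
      have p3 : c + N ≠ 0 := fun h => hc N (eq_neg_of_add_eq_zero_left h)
      have e2 : ((N + 1 : ℕ) : ℂ) * gt a b c (N + 1) =
          gt a b c N * ((a + N) * (b + N) / (c + N)) := by
        have p1 := poch_ne_zero hc N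
        have p4 : (N.factorial : ℂ) ≠ 0 := by exact_mod_cast N.factorial_ne_zero
        have p5 : (N : ℂ) + 1 ≠ 0 := by exact_mod_cast N.succ_ne_zero
        rw [gt, gt, poch_succ, poch_succ, poch_succ, Nat.factorial_succ]
        push_cast
        field_simp
      rw [e2, e1]
      field_simp
      ring
  simp only [key] at h
  have h0 := (gt_tendsto a b c hc hre).const_mul (-c)
  have := tendsto_nhds_unique h h0
  linear_combination this

theorem gauss_iter (a b c : ℂ) (hc : ∀ n : ℕ, c ≠ -(n : ℂ)) (hre : 0 < (c - a - b).re) (N : ℕ) :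
    poch c N * poch (c - a - b) N * ∑' n, gt a b c n =
      poch (c - a) N * poch (c - b) N * ∑' n, gt a b (c + N) n := by
  induction N with
  | zero => simp [poch_zero]
  | succ N ih =>
    have hc1 : ∀ n : ℕ, c + N ≠ -(n : ℂ) := by
      intro n h
      exact hc (n + N) (by push_cast; linear_combination h)
    have hre1 : 0 < (c + N - a - b).re := by
      simp only [Complex.sub_re, Complex.add_re, Complex.natCast_re] at *
      have : (0 : ℝ) ≤ N := Nat.cast_nonneg N
      linarith
    have h := gauss_step a b (c + N) hc1 hre1
    have e : c + ((N + 1 : ℕ) : ℂ) = c + N + 1 := by push_cast; ring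
    rw [e]
    simp only [poch_succ]
    linear_combination (c + N) * (c + N - a - b) * ih + poch (c - a) N * poch (c - b) N * h

theorem poch_norm_mono (c : ℂ) (hc : 0 ≤ c.re) (N n : ℕ) : ‖poch c n‖ ≤ ‖poch (c + N) n‖ := by
  rw [poch_prod, poch_prod, norm_prod, norm_prod]
  apply Finset.prod_le_prod
  · intros; positivity
  · intro j _
    rw [Complex.norm_def, Complex.norm_def]
    apply Real.sqrt_le_sqrt
    simp only [Complex.normSq_apply, Complex.add_re, Complex.natCast_re, Complex.add_im,
      Complex.natCast_im]
    have h1 : (0 : ℝ) ≤ N := Nat.cast_nonneg N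
    have h2 : (0 : ℝ) ≤ j := Nat.cast_nonneg j
    nlinarith [mul_nonneg h1 h2, mul_nonneg h1 hc]

theorem gauss_lim (a b c : ℂ) (hc : ∀ n : ℕ, c ≠ -(n : ℂ)) :
    Tendsto (fun N : ℕ => ∑' n, gt a b (c + N) n) atTop (𝓝 1) := by
  obtain ⟨M, hM⟩ := exists_nat_gt (max (-c.re) (-(c - a - b).re))
  have hM1 : 0 < (c + M).re := by
    have := (le_max_left _ _).trans_lt hM
    simp only [Complex.add_re, Complex.natCast_re]; linarith
  have hM2 : 0 < (c + M - a - b).re := by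
    have := (le_max_right _ _).trans_lt hM
    simp only [Complex.add_re, Complex.natCast_re, Complex.sub_re] at *; linarith
  have hcM : ∀ n : ℕ, c + M ≠ -(n : ℂ) := by
    intro n h
    exact hc (n + M) (by push_cast; linear_combination h)
  have hsum := (gt_summable a b (c + M) hcM hM2).norm
  have h1 : ∑' n : ℕ, (if n = 0 then (1 : ℂ) else 0) = 1 := by simp
  rw [← h1]
  refine tendsto_tsum_of_dominated_convergence hsum ?_ ?_
  · intro n
    have hz : Tendsto (fun N : ℕ => ∏ j ∈ Finset.range n, (c + N + j)⁻¹) atTop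
        (𝓝 (∏ j ∈ Finset.range n, (0 : ℂ))) := by
      apply tendsto_finsetProd
      intro j _
      apply Filter.Tendsto.comp tendsto_inv₀_cobounded
      have : Tendsto (fun N : ℕ => (N : ℂ)) atTop (Bornology.cobounded ℂ) := by
        rw [← tendsto_norm_atTop_iff_cobounded]
        simpa using tendsto_natCast_atTop_atTop (R := ℝ)
      have h2 := (tendsto_add_const_cobounded (c + j)).comp this
      refine h2.congr ?_
      intro N
      simp only [Function.comp]
      ring
    have h3 := hz.const_mul (poch a n * poch b n / n.factorial)
    have : (poch a n * poch b n / n.factorial) * ∏ j ∈ Finset.range n, (0 : ℂ) =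
        if n = 0 then 1 else 0 := by
      rcases n with _ | n <;> simp [poch_zero]
    rw [this] at h3
    refine h3.congr ?_
    intro N
    rw [gt, poch_prod (c + N), Finset.prod_inv_distrib]
    ring
  · filter_upwards [eventually_ge_atTop M] with N hN n
    obtain ⟨K, rfl⟩ := Nat.exists_eq_add_of_le hN
    rw [gt, gt, norm_div, norm_div, norm_mul (poch (c + M) n), norm_mul (poch (c + _) n)]
    have h4 := poch_norm_mono (c + M) hM1.le K n
    have h5 : 0 < ‖poch (c + M) n‖ := norm_pos_iff.mpr (poch_ne_zero hcM n)
    have h6 : 0 < ‖(n.factorial : ℂ)‖ := norm_pos_iff.mpr (by exact_mod_cast n.factorial_ne_zero)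
    have e : c + ((M + K : ℕ) : ℂ) = c + M + K := by push_cast; ring
    rw [e]
    gcongr

theorem ne_neg_of_re_pos {s : ℂ} (h : 0 < s.re) : ∀ n : ℕ, s ≠ -(n : ℂ) := by
  intro n hs
  rw [hs] at h
  simp only [Complex.neg_re, Complex.natCast_re] at h
  have : (0 : ℝ) ≤ n := Nat.cast_nonneg n
  linarith

theorem gauss (a b c : ℂ) (hc : ∀ n : ℕ, c ≠ -(n : ℂ)) (hca : ∀ n : ℕ, c - a ≠ -(n : ℂ))
    (hcb : ∀ n : ℕ, c - b ≠ -(n : ℂ)) (hre : 0 < (c - a - b).re) :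
    ∑' n, gt a b c n = Complex.Gamma c * Complex.Gamma (c - a - b) /
          (Complex.Gamma (c - a) * Complex.Gamma (c - b)) := by
  have hs := ne_neg_of_re_pos hre
  have hlim := ((Complex.GammaSeq_tendsto_Gamma c).mul
      (Complex.GammaSeq_tendsto_Gamma (c - a - b))).div
    ((Complex.GammaSeq_tendsto_Gamma (c - a)).mul (Complex.GammaSeq_tendsto_Gamma (c - b)))
    (mul_ne_zero (Complex.Gamma_ne_zero hca) (Complex.Gamma_ne_zero hcb))
  have hl := hlim.mul ((tendsto_add_atTop_iff_nat 1).mpr (gauss_lim a b c hc))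
  rw [mul_one] at hl
  refine tendsto_nhds_unique (tendsto_const_nhds.congr' ?_) hl
  filter_upwards [eventually_ne_atTop 0] with n hn
  have h := gauss_iter a b c hc hre (n + 1)
  have e : poch c (n + 1) * poch (c - a - b) (n + 1) ≠ 0 :=
    mul_ne_zero (poch_ne_zero hc _) (poch_ne_zero hs _)
  simp only [Pi.mul_apply, Pi.div_apply]
  have h0 : ∑' n, gt a b c n = poch (c - a) (n + 1) * poch (c - b) (n + 1) /
      (poch c (n + 1) * poch (c - a - b) (n + 1)) * ∑' k, gt a b (c + ((n + 1 : ℕ) : ℂ)) k := by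
    rw [div_mul_eq_mul_div, eq_div_iff e]; linear_combination h
  rw [h0]
  congr 1
  rw [poch_eq_gammaSeq hc hn, poch_eq_gammaSeq hca hn, poch_eq_gammaSeq hcb hn,
    poch_eq_gammaSeq hs hn]
  have hn' : (n : ℂ) ≠ 0 := by exact_mod_cast hn
  have h1 := gammaSeq_ne hc hn
  have h2 := gammaSeq_ne hca hn
  have h3 := gammaSeq_ne hcb hn
  have h4 := gammaSeq_ne hs hn
  have e' : (n : ℂ) ^ (c - a) * (n : ℂ) ^ (c - b) = (n : ℂ) ^ c * (n : ℂ) ^ (c - a - b) := by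
    rw [← Complex.cpow_add _ _ hn', ← Complex.cpow_add _ _ hn']; congr 1; ring
  have h5 : (n : ℂ) ^ c ≠ 0 := by simp [Complex.cpow_eq_zero_iff, hn]
  have h6 : (n : ℂ) ^ (c - a - b) ≠ 0 := by simp [Complex.cpow_eq_zero_iff, hn]
  have h7 : (n.factorial : ℂ) ≠ 0 := by exact_mod_cast n.factorial_ne_zero
  generalize (n : ℂ) ^ (c - a - b) = q at *
  generalize (n : ℂ) ^ c = q1 at *
  generalize (n : ℂ) ^ (c - b) = q2 at *
  generalize (n : ℂ) ^ (c - a) = q3 at *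
  field_simp
  linear_combination e'

theorem poch_reflect (s : ℂ) (k : ℕ) : poch (s - k) k = (-1) ^ k * poch (1 - s) k := by
  rw [poch_prod, poch_prod, ← Finset.prod_range_reflect, ← Finset.card_range k]
  rw [← Finset.prod_const, Finset.card_range, ← Finset.prod_mul_distrib]
  apply Finset.prod_congr rfl
  intro j hj
  have : j + 1 ≤ k := Finset.mem_range.mp hj
  have e : ((k - 1 - j : ℕ) : ℂ) = k - 1 - j := by
    rw [Nat.sub_sub, Nat.cast_sub (by omega)]; push_cast; ring
  rw [e]; ring

theorem gauss_shift (a b c : ℂ) (k : ℕ) (hc : ∀ n : ℕ, c ≠ -(n : ℂ))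
    (hca : ∀ n : ℕ, c - a ≠ -(n : ℂ))
    (hcb : ∀ n : ℕ, c - b ≠ -(n : ℂ)) (hre : (k : ℝ) < (c - a - b).re)
    (hk : poch (1 + a + b - c) k ≠ 0) :
    HasSum (fun n : ℕ => gt a b c n * (n.descFactorial k : ℂ))
      (Complex.Gamma c * Complex.Gamma (c - a - b) /
          (Complex.Gamma (c - a) * Complex.Gamma (c - b)) *
        ((-1) ^ k * poch a k * poch b k / poch (1 + a + b - c) k)) := by
  have hck : ∀ n : ℕ, c + k ≠ -(n : ℂ) := by
    intro n h
    exact hc (n + k) (by push_cast; linear_combination h)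
  have e1 : c + k - (a + k) = c - a := by ring
  have e2 : c + k - (b + k) = c - b := by ring
  have e3 : c - a - (b + k) = c - a - b - k := by ring
  have hre' : 0 < (c - a - b - k).re := by
    rw [Complex.sub_re, Complex.natCast_re]; linarith
  have hg := gauss (a + k) (b + k) (c + k) hck (by rwa [e1]) (by rwa [e2])
    (by rwa [e1, e3])
  have hsm := (gt_summable (a + k) (b + k) (c + k) hck (by rwa [e1, e3])).hasSum
  rw [hg, e1, e2, e3] at hsm
  have hs2 := hsm.mul_left (poch a k * poch b k / poch c k)
  rw [← hasSum_nat_add_iff' k]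
  have hz : ∑ i ∈ Finset.range k, gt a b c i * (i.descFactorial k : ℂ) = 0 := by
    apply Finset.sum_eq_zero
    intro i hi
    rw [Nat.descFactorial_eq_zero_iff_lt.mpr (Finset.mem_range.mp hi)]
    simp
  rw [hz, sub_zero]
  convert! hs2 using 1
  · funext n
    have hf : ((n + k).descFactorial k : ℂ) * n.factorial = (n + k).factorial := by
      have := Nat.factorial_mul_descFactorial (Nat.le_add_left k n)
      rw [Nat.add_sub_cancel] at this
      rw [← this]; push_cast; ring
    rw [gt, gt, add_comm n k, poch_add, poch_add, poch_add, add_comm k n, ← hf]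
    have p1 := poch_ne_zero hc k
    have p2 := poch_ne_zero hck n
    have p3 : (n.factorial : ℂ) ≠ 0 := by exact_mod_cast n.factorial_ne_zero
    have p4 : ((n + k).descFactorial k : ℂ) ≠ 0 := by
      rw [Nat.cast_ne_zero]
      intro h
      have := Nat.descFactorial_eq_zero_iff_lt.mp h
      omega
    field_simp
  · have g1 : Complex.Gamma (c + k) = poch c k * Complex.Gamma c := by
      rw [poch, ← Complex.Gamma_add_nat_div_Gamma_eq c hc,
        div_mul_cancel₀ _ (Complex.Gamma_ne_zero hc)]
    have hs := ne_neg_of_re_pos hre'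
    have g2 : Complex.Gamma (c - a - b) =
        (-1) ^ k * poch (1 + a + b - c) k * Complex.Gamma (c - a - b - k) := by
      have h1 := Complex.Gamma_add_nat_div_Gamma_eq (n := k) _ hs
      rw [sub_add_cancel, div_eq_iff (Complex.Gamma_ne_zero hs)] at h1
      have h2 := poch_reflect (c - a - b) k
      have e : 1 - (c - a - b) = 1 + a + b - c := by ring
      rw [e] at h2
      rw [h1, ← h2]; rfl
    rw [g1, g2]
    have p1 := poch_ne_zero hc k
    have p2 := Complex.Gamma_ne_zero hca
    have p3 := Complex.Gamma_ne_zero hcb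
    have p4 : ((-1 : ℂ) ^ k) * (-1) ^ k = 1 := by rw [← mul_pow]; simp
    field_simp
    linear_combination (Complex.Gamma c * Complex.Gamma (c - a - b - k) * poch a k * poch b k) * p4

theorem newton (P : Polynomial ℂ) (m : ℕ) (hP : P.natDegree ≤ m) (n : ℕ) :
    P.eval (n : ℂ) = ∑ k ∈ Finset.range (m + 1),
      (((-1 : ℂ) ^ k / (Nat.factorial k : ℂ)) *
        ∑ j ∈ Finset.range (k + 1), poch (-(k : ℂ)) j * P.eval (j : ℂ) / (Nat.factorial j : ℂ)) *
      (n.descFactorial k : ℂ) := by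
  have h := shift_eq_sum_fwdDiff_iter (1 : ℂ) P.eval n 0
  simp only [zero_add, nsmul_eq_mul, mul_one] at h
  rw [h]
  have hA : ∑ k ∈ Finset.range (n + 1), (n.choose k : ℂ) * (fwdDiff (1 : ℂ))^[k] P.eval 0 =
      ∑ k ∈ Finset.range (n + m + 1), (n.choose k : ℂ) * (fwdDiff (1 : ℂ))^[k] P.eval 0 := by
    apply Finset.sum_subset (Finset.range_mono (by omega))
    intro k _ hk
    rw [Finset.mem_range, not_lt] at hk
    rw [Nat.choose_eq_zero_of_lt (by omega)]; simp
  have hB : ∑ k ∈ Finset.range (m + 1), (n.choose k : ℂ) * (fwdDiff (1 : ℂ))^[k] P.eval 0 =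
      ∑ k ∈ Finset.range (n + m + 1), (n.choose k : ℂ) * (fwdDiff (1 : ℂ))^[k] P.eval 0 := by
    apply Finset.sum_subset (Finset.range_mono (by omega))
    intro k _ hk
    rw [Finset.mem_range, not_lt] at hk
    rw [Polynomial.fwdDiff_iter_eq_zero_of_degree_lt (by omega : P.natDegree < k)]; simp
  rw [hA, ← hB]
  apply Finset.sum_congr rfl
  intro k _
  rw [fwdDiff_iter_eq_sum_shift, Nat.descFactorial_eq_factorial_mul_choose]
  have p3 : (k.factorial : ℂ) ≠ 0 := by exact_mod_cast k.factorial_ne_zero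
  have : ∑ j ∈ Finset.range (k + 1), ((-1 : ℤ) ^ (k - j) * (k.choose j : ℤ)) • P.eval (0 + j • (1 : ℂ))
      = (-1) ^ k * ∑ j ∈ Finset.range (k + 1),
        poch (-(k : ℂ)) j * P.eval (j : ℂ) / (Nat.factorial j : ℂ) := by
    rw [Finset.mul_sum]
    apply Finset.sum_congr rfl
    intro j hj
    have hj' : j ≤ k := by have := Finset.mem_range.mp hj; omega
    have p4 : (j.factorial : ℂ) ≠ 0 := by exact_mod_cast j.factorial_ne_zero
    rw [poch, ascPochhammer_eval_neg_eq_descPochhammer, descPochhammer_eval_eq_descFactorial,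
      Nat.descFactorial_eq_factorial_mul_choose]
    have e : (-1 : ℂ) ^ k = (-1) ^ (k - j) * (-1) ^ j := by
      rw [← pow_add, Nat.sub_add_cancel hj']
    have e' : (-1 : ℂ) ^ j * (-1) ^ j = 1 := by rw [← mul_pow]; simp
    rw [e]
    simp only [zero_add, nsmul_eq_mul, mul_one, zsmul_eq_mul]
    push_cast
    field_simp
    linear_combination (-((k.choose j : ℂ))) * P.eval (j : ℂ) * e'
  rw [this]
  push_cast
  field_simp

theorem poch_ratio {d : ℂ} (hd : ∀ n : ℕ, d ≠ -(n : ℂ)) (m n : ℕ) :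
    poch (d + m) n / poch d n = (poch d m)⁻¹ * poch (d + n) m := by
  have h1 := poch_add d m n
  rw [add_comm m n, poch_add] at h1
  have p1 := poch_ne_zero hd n
  have p2 := poch_ne_zero hd m
  field_simp
  linear_combination -h1

theorem generalized_karlsson_minton
    (r : ℕ) (hr : 0 < r)
    (mv : Fin r → ℕ) (hmv : ∀ i, 0 < mv i)
    (m : ℕ) (hm : m = ∑ i, mv i)
    (a b c : ℂ) (d : Fin r → ℂ)
    (hre : (c - a - b).re > (m : ℝ))
    (hc : ∀ n : ℕ, c ≠ -(n : ℂ))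
    (hca : ∀ n : ℕ, c - a ≠ -(n : ℂ))
    (hcb : ∀ n : ℕ, c - b ≠ -(n : ℂ))
    (hd : ∀ i, ∀ n : ℕ, d i ≠ -(n : ℂ))
    (habc : ∀ k ≤ m, poch (1 + a + b - c) k ≠ 0)
    (C : ℕ → ℂ)
    (hC : ∀ k ≤ m, C k = ((-1 : ℂ) ^ k / (Nat.factorial k : ℂ)) *
      ∑ j ∈ Finset.range (k + 1), poch (-(k : ℂ)) j * (∏ i, poch (d i + (mv i : ℂ)) j) /
        ((∏ i, poch (d i) j) * (Nat.factorial j : ℂ))) :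
    ∑' k : ℕ, poch a k * poch b k * (∏ i, poch (d i + (mv i : ℂ)) k) /
        (poch c k * (∏ i, poch (d i) k) * (Nat.factorial k : ℂ))
      = (Complex.Gamma c * Complex.Gamma (c - a - b) /
          (Complex.Gamma (c - a) * Complex.Gamma (c - b))) *
        ∑ k ∈ Finset.range (m + 1),
          (-1 : ℂ) ^ k * poch a k * poch b k * C k / poch (1 + a + b - c) k := by
  let P : Polynomial ℂ := ∏ i, (Polynomial.C (poch (d i) (mv i))⁻¹ *
    (ascPochhammer ℂ (mv i)).comp (Polynomial.X + Polynomial.C (d i)))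
  have hPe : ∀ n : ℕ, P.eval (n : ℂ) = (∏ i, poch (d i + (mv i : ℂ)) n) / ∏ i, poch (d i) n := by
    intro n
    rw [← Finset.prod_div_distrib, Polynomial.eval_prod]
    apply Finset.prod_congr rfl
    intro i _
    rw [poch_ratio (hd i)]
    simp [poch, Polynomial.eval_comp, add_comm]
  have hPd : P.natDegree ≤ m := by
    rw [hm]
    refine (Polynomial.natDegree_prod_le _ _).trans (Finset.sum_le_sum ?_)
    intro i _
    refine (Polynomial.natDegree_C_mul_le _ _).trans ?_
    rw [Polynomial.natDegree_comp, ascPochhammer_natDegree, Polynomial.natDegree_X_add_C, mul_one]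
  have hN : ∀ n : ℕ, P.eval (n : ℂ) =
      ∑ k ∈ Finset.range (m + 1), C k * (n.descFactorial k : ℂ) := by
    intro n
    rw [newton P m hPd n]
    apply Finset.sum_congr rfl
    intro k hk
    rw [hC k (by have := Finset.mem_range.mp hk; omega)]
    congr 2
    apply Finset.sum_congr rfl
    intro j _
    rw [hPe, mul_div_assoc, mul_div_assoc, div_div]
  have hS := hasSum_sum (s := Finset.range (m + 1)) fun k hk =>
    (gauss_shift a b c k hc hca hcb
      (lt_of_le_of_lt (by
        have : k ≤ m := by have := Finset.mem_range.mp hk; omega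
        exact_mod_cast this) hre)
      (habc k (by have := Finset.mem_range.mp hk; omega))).mul_left (C k)
  have e : (fun k : ℕ => poch a k * poch b k * (∏ i, poch (d i + (mv i : ℂ)) k) /
        (poch c k * (∏ i, poch (d i) k) * (Nat.factorial k : ℂ))) =
      fun n => ∑ k ∈ Finset.range (m + 1), C k * (gt a b c n * (n.descFactorial k : ℂ)) := by
    funext n
    have : ∑ k ∈ Finset.range (m + 1), C k * (gt a b c n * (n.descFactorial k : ℂ)) =
        gt a b c n * P.eval (n : ℂ) := by
      rw [hN, Finset.mul_sum]
      apply Finset.sum_congr rfl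
      intros; ring
    rw [this, hPe, gt, div_mul_div_comm]
    congr 1; ring
  rw [e, hS.tsum_eq, Finset.mul_sum]
  apply Finset.sum_congr rfl
  intros; ring
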